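/- Let I be a finite set of intersections, and for each i ∈ I let the neighborhood control vector be x_i = M_i z, where z = ((z)_1, …, (z)_{|I|}) is the concatenation of per-intersection blocks (z)_j ∈ ℝ^{K_j} and M_i selects the blocks of intersections in N_i ∪ {i}. For dual vectors λ_i (with block components (λ_i)_j) and iterates x_i^{k+1} (with block components (x_i^{k+1})_j), and any z whose blocks are one-hot, i.e., (z)_j ∈ {0,1}^{K_j} with exactly one entry equal to 1 for each j, the objective Σ_{i∈I} ( λ_i^⊤ M_i z − (ρ/2) ‖x_i^{k+1} − M_i z‖₂² ) equals Σ_{j∈I} ( Σ_{i : j ∈ N_i ∪ {i}} ((λ_i)_j + ρ (x_i^{k+1})_j) )^⊤ (z)_j + C, where C is a constant independent of z. Consequently the objective decomposes into a sum of functions each depending on a single block (z)_j. -/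

import Mathlib

open Finset

/-!
Expanding `‖x_i - M_i z‖²` leaves `‖M_i z‖²` as the only term of the objective that is quadratic
in `z`, and it only involves the squared norms of the blocks of `z`. A one-hot block has squared
norm `1`, so on the feasible set the objective is affine; regrouping its linear part by blocks
gives the decomposition.
-/

/-- One-hot vectors, the encoding of a choice of exactly one index (for a traffic intersection, of
its active phase). In positive characteristic `p` the condition on the sum only fixes the number of
ones modulo `p`. -/
def IsOneHot {R κ : Type*} [Semiring R] [Fintype κ] (v : κ → R) : Prop :=
  (∀ k, v k = 0 ∨ v k = 1) ∧ ∑ k, v k = 1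

theorem IsOneHot.sum_sq_eq_one {R κ : Type*} [Semiring R] [Fintype κ] {v : κ → R}
    (hv : IsOneHot v) : ∑ k, v k ^ 2 = 1 := by
  have sq_eq_self (k : κ) : v k ^ 2 = v k := by
    rcases hv.1 k with h | h <;> simp [h]
  simpa only [sq_eq_self] using hv.2

theorem sum_mul_sub_mul_sum_sub_sq {R κ : Type*} [CommRing R] [Fintype κ]
    (a x z : κ → R) (γ : R) :
    ∑ k, a k * z k - γ * ∑ k, (x k - z k) ^ 2
      = ∑ k, (a k + 2 * γ * x k) * z k - γ * (∑ k, x k ^ 2 + ∑ k, z k ^ 2) := by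
  simp only [mul_sum, ← sum_add_distrib, ← sum_sub_distrib]
  exact sum_congr rfl fun k _ => by ring

section Blocks

variable {R I J : Type*} {κ : J → Type*} [Fintype I] [Fintype J] [DecidableEq J]
  [∀ j, Fintype (κ j)]

-- The transpose of restricting `z` to the blocks in `S i` is extension by zero, so this is
-- `∑ i, ⟪b i, M i z⟫ = ⟪∑ i, (M i)ᵀ (b i), z⟫`.
theorem sum_sum_mem_sum_mul_eq_sum_sum_sum_filter_mul [NonUnitalNonAssocSemiring R]
    (S : I → Finset J) (b : I → ∀ j, κ j → R) (z : ∀ j, κ j → R) :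
    ∑ i, ∑ j ∈ S i, ∑ k, b i j k * z j k
      = ∑ j, ∑ k, (∑ i with j ∈ S i, b i j k) * z j k := by
  calc ∑ i, ∑ j ∈ S i, ∑ k, b i j k * z j k
      = ∑ j, ∑ i with j ∈ S i, ∑ k, b i j k * z j k := sum_comm' (by simp)
    _ = ∑ j, ∑ k, (∑ i with j ∈ S i, b i j k) * z j k := by
        simp only [sum_mul]
        exact sum_congr rfl fun j _ => sum_comm

variable [CommRing R] (S : I → Finset J) (lam x : I → ∀ j, κ j → R) (γ : R)

theorem consensus_objective_eq_linear_sub_sum_sq (z : ∀ j, κ j → R) :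
    ∑ i, ((∑ j ∈ S i, ∑ k, lam i j k * z j k)
        - γ * ∑ j ∈ S i, ∑ k, (x i j k - z j k) ^ 2)
      = ∑ j, ∑ k, (∑ i with j ∈ S i, (lam i j k + 2 * γ * x i j k)) * z j k
        - γ * ∑ i, ∑ j ∈ S i, (∑ k, x i j k ^ 2 + ∑ k, z j k ^ 2) := by
  rw [← sum_sum_mem_sum_mul_eq_sum_sum_sum_filter_mul, mul_sum, ← sum_sub_distrib]
  refine sum_congr rfl fun i _ => ?_
  simp only [mul_sum (S i), ← sum_sub_distrib, sum_mul_sub_mul_sum_sub_sq]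

/-- The decomposition for a consensus problem in which agent `i` holds a copy of the blocks in
`S i` and the blocks of `z` have prescribed squared norms `c j`. The penalty parameter is
`ρ = 2 * γ`, so that no division by `2` is needed. -/
theorem admm_z_update_decomposition_general (c : J → R) :
    ∃ C : R, ∀ z : ∀ j, κ j → R, (∀ j, ∑ k, z j k ^ 2 = c j) →
      ∑ i, ((∑ j ∈ S i, ∑ k, lam i j k * z j k)
          - γ * ∑ j ∈ S i, ∑ k, (x i j k - z j k) ^ 2)
        = ∑ j, ∑ k, (∑ i with j ∈ S i, (lam i j k + 2 * γ * x i j k)) * z j k + C := by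
  refine ⟨-(γ * ∑ i, ∑ j ∈ S i, (∑ k, x i j k ^ 2 + c j)), fun z hz => ?_⟩
  rw [consensus_objective_eq_linear_sub_sum_sq, sub_eq_add_neg]
  simp only [hz]

end Blocks

/-- ADMM z-update decomposition: for one-hot block variables `z`, the augmented
Lagrangian objective `Σ_i (λ_i^⊤ M_i z − (ρ/2) ‖x_i − M_i z‖²)` equals
`Σ_j (Σ_{i : j ∈ N_i ∪ {i}} ((λ_i)_j + ρ (x_i)_j))^⊤ (z)_j + C` for a constant `C`
independent of `z`; hence the objective decomposes blockwise. -/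
theorem admm_z_update_decomposition
    {I : Type*} [Fintype I] [DecidableEq I] (K : I → ℕ)
    (N : I → Finset I)
    (lam x : I → ∀ j : I, Fin (K j) → ℝ) (ρ : ℝ) :
    ∃ C : ℝ, ∀ z : ∀ j : I, Fin (K j) → ℝ,
      (∀ j : I, (∀ k, z j k = 0 ∨ z j k = 1) ∧ ∑ k, z j k = 1) →
      ∑ i : I,
        ((∑ j ∈ insert i (N i), ∑ k, lam i j k * z j k)
          - (ρ / 2) * ∑ j ∈ insert i (N i), ∑ k, (x i j k - z j k) ^ 2)
      = (∑ j : I, ∑ k,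
          (∑ i ∈ Finset.univ.filter (fun i : I => j ∈ insert i (N i)),
            (lam i j k + ρ * x i j k)) * z j k) + C := by
  obtain ⟨C, hC⟩ := admm_z_update_decomposition_general (fun i => insert i (N i)) lam x (ρ / 2) 1
  rw [mul_div_cancel₀ ρ two_ne_zero] at hC
  exact ⟨C, fun z hz => hC z fun j => IsOneHot.sum_sq_eq_one (hz j)⟩
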